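/- arXiv:2501.00931 — 3 statements merged into one kernel-verified Lean document; each statement's English description precedes it below -/
import Mathlib

section
/- Let S be a Noetherian regular local ring of characteristic p which is F-finite, A = S⟦π⟧, and K = A_π the localization of A away from π. Let m ≥ 1 and let n be an integer; let s be the least j with 0 ≤ j ≤ m−1 such that p^(m−1−j) divides n, and set i = n / p^(m−1−s) ∈ ℤ. Let ι : 𝕎 S → 𝕎 K be induced by S → K. Then the map b ↦ V^s(teichmuller(π^i)·ι(b)) induces a bijection from (truncated length m−s) Witt vectors of S onto the graded piece fil_{−n} W_m(K) / fil_{−n−1} W_m(K); concretely: (surjectivity) for every a ∈ 𝕎 K satisfying fil(π^{−n}, m) there exists b ∈ 𝕎 S such that a − V^s(teichmuller(π^i)·ι(b)) satisfies fil(π^{−n−1}, m); and (injectivity) for every b ∈ 𝕎 S, if V^s(teichmuller(π^i)·ι(b)) satisfies fil(π^{−n−1}, m) then b.coeff j = 0 for all j < m − s. -/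
namespace IsLocalRing

/-- A Noetherian local ring whose maximal ideal is generated by at most `dim R` elements is a
domain. -/
theorem isDomain_of_span_eq_maximalIdeal {R : Type*} [CommRing R] [IsNoetherianRing R]
    [IsLocalRing R] (d : ℕ) (v : Fin d → R)
    (hv : Ideal.span (Set.range v) = maximalIdeal R) (hd : (d : WithBot ℕ∞) ≤ ringKrullDim R) :
    IsDomain R := by
  induction d generalizing R with
  | zero =>
    have hbot : maximalIdeal R = ⊥ := by
      rw [← hv, Set.range_eq_empty, Ideal.span_empty]
    exact (isField_iff_maximalIdeal_eq.mpr hbot).isDomain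
  | succ d ih =>
    have hnot_min : ∀ P ∈ minimalPrimes R, ¬ maximalIdeal R ≤ P := by
      intro P hP hle
      have hprime : P.IsPrime := hP.1.1
      have heq : P = maximalIdeal R := le_antisymm (le_maximalIdeal hprime.ne_top) hle
      have hht : (maximalIdeal R).height = 0 := by
        rw [Ideal.height_eq_zero_iff]
        rwa [← heq]
      rw [← maximalIdeal_height_eq_ringKrullDim, hht] at hd
      norm_cast at hd
    have hnot_sq : ¬ maximalIdeal R ≤ maximalIdeal R ^ 2 := by
      intro hle
      have hbot : maximalIdeal R = ⊥ :=
        Submodule.eq_bot_of_le_smul_of_le_jacobson_bot (maximalIdeal R) (maximalIdeal R)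
          (IsNoetherian.noetherian _) (by rwa [smul_eq_mul, ← sq])
          (maximalIdeal_le_jacobson ⊥)
      obtain ⟨P, hP⟩ := Ideal.nonempty_minimalPrimes (I := (⊥ : Ideal R)) bot_ne_top
      exact hnot_min P hP (hbot.le.trans bot_le)
    obtain ⟨x, hxm, hxsq, hxmin⟩ : ∃ x ∈ maximalIdeal R, x ∉ maximalIdeal R ^ 2 ∧
        ∀ P ∈ minimalPrimes R, x ∉ P := by
      classical
      by_contra! hcon
      have hfin := minimalPrimes.finite_of_isNoetherianRing R
      have hsub : (maximalIdeal R : Set R) ⊆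
          ⋃ I ∈ ((insert (maximalIdeal R ^ 2) hfin.toFinset : Finset (Ideal R)) :
            Set (Ideal R)), ((id I : Ideal R) : Set R) := by
        intro x hx
        simp only [Finset.coe_insert, Set.Finite.coe_toFinset, Set.mem_iUnion, Set.mem_insert_iff,
          id, SetLike.mem_coe, exists_prop]
        by_cases h : x ∈ maximalIdeal R ^ 2
        · exact ⟨_, Or.inl rfl, h⟩
        · obtain ⟨P, hP, hxP⟩ := hcon x hx h
          exact ⟨P, Or.inr hP, hxP⟩
      obtain ⟨I, hI, hle⟩ := (Ideal.subset_union_prime (maximalIdeal R ^ 2) (maximalIdeal R ^ 2)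
        (fun I hI h _ => by
          have hI' := (Finset.mem_insert.mp hI).resolve_left h
          exact ((Set.Finite.mem_toFinset _).mp hI').1.1)).mp hsub
      rcases Finset.mem_insert.mp hI with rfl | hI
      · exact hnot_sq hle
      · exact hnot_min I ((Set.Finite.mem_toFinset _).mp hI) hle
    have hproper : Ideal.span {x} ≠ ⊤ := by
      intro h
      rw [Ideal.span_singleton_eq_top] at h
      exact (mem_maximalIdeal x).mp hxm h
    have : Nontrivial (R ⧸ Ideal.span {x}) := Ideal.Quotient.nontrivial_iff.mpr hproper
    have hloc : IsLocalRing (R ⧸ Ideal.span {x}) :=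
      .of_surjective' (Ideal.Quotient.mk _) Ideal.Quotient.mk_surjective
    have hv_mem : ∀ k, v k ∈ maximalIdeal R := fun k => hv ▸ Ideal.subset_span ⟨k, rfl⟩
    obtain ⟨c, hc⟩ : ∃ c : Fin (d + 1) → R, ∑ k, c k * v k = x := by
      rw [← hv, Ideal.mem_span_range_iff_exists_fun] at hxm
      exact hxm
    obtain ⟨k, hk⟩ : ∃ k, IsUnit (c k) := by
      by_contra! hcon
      refine hxsq (hc ▸ Ideal.sum_mem _ fun k _ => ?_)
      rw [sq]
      exact Ideal.mul_mem_mul ((mem_maximalIdeal _).mpr (hcon k)) (hv_mem k)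
    have hmap : (maximalIdeal R).map (Ideal.Quotient.mk (Ideal.span {x})) =
        maximalIdeal (R ⧸ Ideal.span {x}) := by
      have : ((maximalIdeal R).map (Ideal.Quotient.mk (Ideal.span {x}))).IsMaximal :=
        Ideal.IsMaximal.map_of_surjective_of_ker_le Ideal.Quotient.mk_surjective (by
          rw [Ideal.mk_ker, Ideal.span_singleton_le_iff_mem]; exact hxm)
      exact eq_maximalIdeal this
    have hspan : Ideal.span (Set.range fun l => Ideal.Quotient.mk (Ideal.span {x})
        (v (k.succAbove l))) = maximalIdeal (R ⧸ Ideal.span {x}) := by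
      refine le_antisymm ?_ ?_
      · rw [Ideal.span_le]
        rintro _ ⟨l, rfl⟩
        rw [← hmap]
        exact Ideal.mem_map_of_mem _ (hv_mem _)
      · rw [← hmap, ← hv, Ideal.map_span, Ideal.span_le]
        rintro _ ⟨_, ⟨l, rfl⟩, rfl⟩
        have hmem : ∀ l, Ideal.Quotient.mk (Ideal.span {x}) (v (k.succAbove l)) ∈
            Ideal.span (Set.range fun l => Ideal.Quotient.mk (Ideal.span {x})
              (v (k.succAbove l))) := fun l => Ideal.subset_span ⟨l, rfl⟩
        rcases Fin.eq_self_or_eq_succAbove k l with rfl | ⟨l, rfl⟩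
        · have h0 := congrArg (Ideal.Quotient.mk (Ideal.span {x})) hc
          rw [Fin.sum_univ_succAbove _ l, map_add, map_sum, map_mul,
            Ideal.Quotient.eq_zero_iff_mem.mpr (Ideal.mem_span_singleton_self x),
            add_eq_zero_iff_eq_neg] at h0
          rw [SetLike.mem_coe, ← Ideal.unit_mul_mem_iff_mem _ (hk.map (Ideal.Quotient.mk _)), h0]
          refine neg_mem (Ideal.sum_mem _ fun l' _ => ?_)
          rw [map_mul]
          exact Ideal.mul_mem_left _ _ (hmem l')
        · exact hmem l
    have hdim : (d : WithBot ℕ∞) ≤ ringKrullDim (R ⧸ Ideal.span {x}) := by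
      have h := Ideal.height_le_ringKrullDim_quotient_add_one hxm
      rw [maximalIdeal_height_eq_ringKrullDim] at h
      have h' := hd.trans h
      push_cast at h'
      obtain ⟨e, he⟩ := WithBot.ne_bot_iff_exists.mp
        (ringKrullDim_ne_bot (R := R ⧸ Ideal.span {x}))
      rw [← he] at h' ⊢
      norm_cast at h' ⊢
      exact (ENat.add_le_add_iff_right ENat.one_ne_top).mp h'
    have hdom := ih _ hspan hdim
    have hprime : (Ideal.span {x}).IsPrime := (Ideal.Quotient.isDomain_iff_prime _).mp hdom
    obtain ⟨Q, hQ, hQx⟩ := Ideal.exists_minimalPrimes_le (bot_le : ⊥ ≤ Ideal.span {x})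
    have hQprime : Q.IsPrime := hQ.1.1
    have hQbot : Q = ⊥ := by
      refine Submodule.eq_bot_of_le_smul_of_le_jacobson_bot (maximalIdeal R) Q
        (IsNoetherian.noetherian _) (fun y hy => ?_) (maximalIdeal_le_jacobson ⊥)
      obtain ⟨z, rfl⟩ := Ideal.mem_span_singleton'.mp (hQx hy)
      rw [smul_eq_mul, mul_comm z]
      exact Ideal.mul_mem_mul hxm ((hQprime.mem_or_mem hy).resolve_right (hxmin Q hQ))
    rw [hQbot] at hQprime
    exact IsDomain.of_bot_isPrime R

end IsLocalRing

namespace WittVector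

variable {p : ℕ} [Fact p.Prime]

private theorem teichmuller_mul_eq_mk_rat {σ : Type*} (r : MvPolynomial σ ℚ)
    (x : WittVector p (MvPolynomial σ ℚ)) :
    teichmuller p r * x = mk p fun n => r ^ p ^ n * x.coeff n := by
  apply (ghostMap.bijective_of_invertible p (MvPolynomial σ ℚ)).1
  ext1 n
  simp only [map_mul, ghostMap_apply, ghostComponent_teichmuller]
  simp only [ghostComponent_apply, aeval_wittPolynomial, Finset.mul_sum]
  refine Finset.sum_congr rfl fun j hj => ?_
  have hj' : j + (n - j) = n := by
    have := Finset.mem_range.mp hj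
    omega
  rw [coeff_mk, mul_pow, ← pow_mul, ← pow_add, hj']
  ring

theorem teichmuller_mul_eq_mk {R : Type*} [CommRing R] (r : R) (x : WittVector p R) :
    teichmuller p r * x = mk p fun n => r ^ p ^ n * x.coeff n := by
  obtain ⟨r, rfl⟩ := MvPolynomial.counit_surjective R r
  obtain ⟨x, rfl⟩ := map_surjective _ (MvPolynomial.counit_surjective R) x
  have hint : teichmuller p r * x = mk p fun n => r ^ p ^ n * x.coeff n := by
    refine map_injective (MvPolynomial.map (Int.castRingHom ℚ))
      (MvPolynomial.map_injective _ Int.cast_injective) ?_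
    rw [map_mul, map_teichmuller, teichmuller_mul_eq_mk_rat]
    ext1 n
    simp only [map_coeff, coeff_mk, map_mul, map_pow]
  rw [← map_teichmuller, ← map_mul, hint]
  ext1 n
  simp only [map_coeff, coeff_mk, map_mul, map_pow]

theorem coeff_teichmuller_mul {R : Type*} [CommRing R] (r : R) (x : WittVector p R) (n : ℕ) :
    (teichmuller p r * x).coeff n = r ^ p ^ n * x.coeff n := by
  rw [teichmuller_mul_eq_mk, coeff_mk]

theorem iterate_verschiebung_sub {R : Type*} [CommRing R] (s : ℕ) (x y : WittVector p R) :
    (fun c : WittVector p R => verschiebung c)^[s] (x - y) =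
      (fun c : WittVector p R => verschiebung c)^[s] x -
        (fun c : WittVector p R => verschiebung c)^[s] y := by
  induction s with
  | zero => rfl
  | succ s ih => simp only [Function.iterate_succ_apply', ih, map_sub]

theorem coeff_sub_congr {R : Type*} [CommRing R] {m : ℕ} {x y : WittVector p R}
    (h : ∀ j < m, x.coeff j = y.coeff j) (z : WittVector p R) {j : ℕ} (hj : j < m) :
    (x - z).coeff j = (y - z).coeff j := by
  have hinit : init m x = init m y := by
    ext k
    simp only [init, select, coeff_mk]
    split_ifs with hk
    · exact h k hk
    · rfl
  have hsub : init m (x - z) = init m (y - z) := by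
    rw [init_sub, hinit, ← init_sub]
  simpa only [init, select, coeff_mk, if_pos hj] using congrArg (fun w => w.coeff j) hsub

end WittVector

namespace PowerSeries

variable {S : Type*} [CommRing S] {K : Type*} [CommRing K] [Algebra S⟦X⟧ K] {u : Kˣ}

theorem algebraMap_X_pow_mul (hu : (u : K) = algebraMap S⟦X⟧ K X) (k : ℕ) (f : S⟦X⟧) :
    algebraMap S⟦X⟧ K (X ^ k * f) = ((u ^ (k : ℤ) : Kˣ) : K) * algebraMap S⟦X⟧ K f := by
  rw [map_mul, map_pow, ← hu, zpow_natCast, Units.val_pow_eq_pow_val]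

theorem algebraMap_away_X_injective (S K : Type*) [CommRing S] [IsDomain S] [CommRing K]
    [Algebra S⟦X⟧ K] [IsLocalization.Away (X : S⟦X⟧) K] :
    Function.Injective (algebraMap S⟦X⟧ K) :=
  IsLocalization.injective K (powers_le_nonZeroDivisors_of_noZeroDivisors X_ne_zero)

variable [IsLocalization.Away (X : S⟦X⟧) K]

theorem exists_eq_zpow_mul_of_ne_zero (hu : (u : K) = algebraMap S⟦X⟧ K X) {c : K} (hc : c ≠ 0) :
    ∃ (r : ℤ) (f : S⟦X⟧), constantCoeff f ≠ 0 ∧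
      c = ((u ^ r : Kˣ) : K) * algebraMap S⟦X⟧ K f := by
  obtain ⟨k, g, hg⟩ := IsLocalization.Away.surj (X : S⟦X⟧) c
  have hg0 : g ≠ 0 := by
    rintro rfl
    rw [map_zero, ← hu, ← Units.val_pow_eq_pow_val, Units.mul_left_eq_zero] at hg
    exact hc hg
  refine ⟨(g.order.toNat : ℤ) - k, g.divXPowOrder,
    fun h => hg0 (constantCoeff_divXPowOrder_eq_zero_iff.mp h), ?_⟩
  rw [← X_pow_order_mul_divXPowOrder (f := g), algebraMap_X_pow_mul hu, ← hu,
    ← Units.val_pow_eq_pow_val, ← zpow_natCast, ← Units.eq_mul_inv_iff_mul_eq] at hg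
  rw [hg, zpow_sub, Units.val_mul]
  ring

variable [IsDomain S]

theorem zpow_mul_mem_range_iff (hu : (u : K) = algebraMap S⟦X⟧ K X) (N : ℤ) {f : S⟦X⟧}
    (hf : constantCoeff f ≠ 0) :
    ((u ^ N : Kˣ) : K) * algebraMap S⟦X⟧ K f ∈ Set.range (algebraMap S⟦X⟧ K) ↔ 0 ≤ N := by
  constructor
  · rintro ⟨g, hg⟩
    by_contra! hN
    obtain ⟨k, rfl⟩ : ∃ k : ℕ, N = -((k + 1 : ℕ) : ℤ) := ⟨(-N - 1).toNat, by omega⟩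
    have hfg : X ^ (k + 1) * g = f := by
      apply algebraMap_away_X_injective S K
      rw [algebraMap_X_pow_mul hu, hg, ← mul_assoc, ← Units.val_mul, ← zpow_add]
      simp
    apply hf
    rw [← hfg]
    simp
  · intro hN
    lift N to ℕ using hN
    exact ⟨X ^ N * f, algebraMap_X_pow_mul hu N f⟩

/-- Membership `u ^ N * c ^ q ∈ S⟦X⟧` only depends on the order of `c`, and so is implied by any
other such membership that forces enough of a bound on that order. -/
theorem zpow_mul_pow_mem_range_of_imp (hu : (u : K) = algebraMap S⟦X⟧ K X) {N N' : ℤ} {q q' : ℕ}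
    (hq' : q' ≠ 0) (himp : ∀ r : ℤ, 0 ≤ N + r * q → 0 ≤ N' + r * q') {c : K}
    (hc : ((u ^ N : Kˣ) : K) * c ^ q ∈ Set.range (algebraMap S⟦X⟧ K)) :
    ((u ^ N' : Kˣ) : K) * c ^ q' ∈ Set.range (algebraMap S⟦X⟧ K) := by
  by_cases h0 : c = 0
  · exact ⟨0, by simp [h0, hq']⟩
  obtain ⟨r, f, hf, rfl⟩ := exists_eq_zpow_mul_of_ne_zero hu h0
  have key : ∀ (M : ℤ) (k : ℕ), ((u ^ M : Kˣ) : K) *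
      (((u ^ r : Kˣ) : K) * algebraMap S⟦X⟧ K f) ^ k ∈ Set.range (algebraMap S⟦X⟧ K) ↔ 0 ≤ M + r * k := by
    intro M k
    rw [mul_pow, ← Units.val_pow_eq_pow_val, ← zpow_natCast, ← zpow_mul, ← mul_assoc,
      ← Units.val_mul, ← zpow_add, ← map_pow]
    exact zpow_mul_mem_range_iff hu _ (by rw [map_pow]; exact pow_ne_zero _ hf)
  rw [key] at hc ⊢
  exact himp r hc

end PowerSeries


/-- The Brylinski–Kato filtration condition on (truncated) Witt vectors, in Witt
coordinates: `a ∈ 𝕎 K` satisfies `fil(x, m)` if for every `j < m` the element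
`x * (a.coeff j) ^ (p ^ (m - 1 - j))` lies in the image of `A` in `K`. -/
def WittFil (p : ℕ) [Fact p.Prime] (A : Type*) {K : Type*} [CommRing A] [CommRing K]
    [Algebra A K] (x : K) (m : ℕ) (a : WittVector p K) : Prop :=
  ∀ j < m, x * a.coeff j ^ p ^ (m - 1 - j) ∈ Set.range (algebraMap A K)

/-- Let `S` be an `F`-finite Noetherian regular local ring of
characteristic `p`, `A = S⟦π⟧`, `K = A_π` (with `π` a unit `u` of `K`).  Let `m ≥ 1`,
`n ∈ ℤ`, `s` the least `j ≤ m-1` with `p^(m-1-j) ∣ n`, and `i = n / p^(m-1-s)`.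
Then `b ↦ V^s(teichmuller(π^i)·ι(b))` induces a bijection of the length-`(m-s)`
truncated Witt vectors of `S` onto `fil_{-n} W_m(K) / fil_{-n-1} W_m(K)`:
(surjectivity) every `a` satisfying `fil(π^{-n}, m)` differs from some
`V^s(teichmuller(π^i)·ι(b))` by an element satisfying `fil(π^{-n-1}, m)`; and
(injectivity) if `V^s(teichmuller(π^i)·ι(b))` satisfies `fil(π^{-n-1}, m)` then
`b.coeff j = 0` for all `j < m - s`. -/
theorem wittFil_graded_piece_bijection
    (p : ℕ) [Fact p.Prime]
    (S : Type*) [CommRing S] [IsNoetherianRing S] [IsLocalRing S] [CharP S p]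
    (hreg : ∃ (d : ℕ) (v : Fin d → S),
      Ideal.span (Set.range v) = IsLocalRing.maximalIdeal S ∧ ringKrullDim S = d)
    (hF : (frobenius S p).Finite)
    (K : Type*) [CommRing K] [Algebra (PowerSeries S) K]
    [IsLocalization.Away (PowerSeries.X : PowerSeries S) K]
    [Algebra S K] [IsScalarTower S (PowerSeries S) K]
    (u : Kˣ) (hu : (u : K) = algebraMap (PowerSeries S) K PowerSeries.X)
    (m : ℕ) (hm : 1 ≤ m) (n : ℤ)
    (s : ℕ) (hs : s ≤ m - 1) (hsdvd : (p : ℤ) ^ (m - 1 - s) ∣ n)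
    (hsmin : ∀ j < s, ¬ (p : ℤ) ^ (m - 1 - j) ∣ n)
    (i : ℤ) (hi : n = (p : ℤ) ^ (m - 1 - s) * i) :
    (∀ a : WittVector p K, WittFil p (PowerSeries S) ((u ^ (-n) : Kˣ) : K) m a →
      ∃ b : WittVector p S,
        WittFil p (PowerSeries S) ((u ^ (-n - 1) : Kˣ) : K) m
          (a - (fun c : WittVector p K => WittVector.verschiebung c)^[s]
            (WittVector.teichmuller p ((u ^ i : Kˣ) : K) *
              WittVector.map (algebraMap S K) b))) ∧
    (∀ b : WittVector p S,
      WittFil p (PowerSeries S) ((u ^ (-n - 1) : Kˣ) : K) m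
        ((fun c : WittVector p K => WittVector.verschiebung c)^[s]
          (WittVector.teichmuller p ((u ^ i : Kˣ) : K) *
            WittVector.map (algebraMap S K) b)) →
      ∀ j < m - s, b.coeff j = 0) := by
  obtain ⟨d, v, hv, hd⟩ := hreg
  have hdomain : IsDomain S := IsLocalRing.isDomain_of_span_eq_maximalIdeal d v hv hd.ge
  have hp : p.Prime := Fact.out
  have hn : ∀ l < m - s, n = (i * (p ^ l : ℕ)) * (p ^ (m - 1 - (l + s)) : ℕ) := by
    intro l hl
    have hexp : m - 1 - s = l + (m - 1 - (l + s)) := by omega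
    rw [hi, hexp, pow_add]
    push_cast
    ring
  have hzpow : ∀ (k : ℤ) (q : ℕ), ((u ^ k : Kˣ) : K) ^ q = ((u ^ (k * q) : Kˣ) : K) := by
    intro k q
    rw [zpow_mul, zpow_natCast, Units.val_pow_eq_pow_val]
  have hscale : ∀ l < m - s, ∀ c : K,
      ((u ^ (-n - 1) : Kˣ) : K) *
        (((u ^ i : Kˣ) : K) ^ p ^ l * c) ^ p ^ (m - 1 - (l + s)) =
      ((u ^ (-1 : ℤ) : Kˣ) : K) * c ^ p ^ (m - 1 - (l + s)) := by
    intro l hl c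
    rw [mul_pow, hzpow, hzpow, ← hn l hl, ← mul_assoc, ← Units.val_mul, ← zpow_add]
    congr 3
    ring
  have hshift : ∀ (x : WittVector p K) (l : ℕ),
      ((fun c : WittVector p K => WittVector.verschiebung c)^[s] x).coeff (l + s) = x.coeff l :=
    fun x l => WittVector.iterate_verschiebung_coeff x s l
  have hshift_zero : ∀ (x : WittVector p K), ∀ j < s,
      ((fun c : WittVector p K => WittVector.verschiebung c)^[s] x).coeff j = 0 :=
    fun x j hj => WittVector.iterate_verschiebung_coeff_eq_zero x hj
  refine ⟨fun a ha => ?_, fun b hb j hj => ?_⟩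
  · have hex : ∀ l, ∃ f : PowerSeries S, l < m - s →
        algebraMap (PowerSeries S) K f =
          ((u ^ (-(i * (p ^ l : ℕ))) : Kˣ) : K) * a.coeff (l + s) := by
      intro l
      by_cases hl : l < m - s
      · have hmem := PowerSeries.zpow_mul_pow_mem_range_of_imp hu
          (N' := -(i * (p ^ l : ℕ))) one_ne_zero (fun r hr => by
            rw [hn l hl, ← neg_mul, ← add_mul] at hr
            rw [Nat.cast_one, mul_one]
            exact nonneg_of_mul_nonneg_left hr (by exact_mod_cast pow_pos hp.pos _))
          (ha (l + s) (by omega))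
        rw [pow_one] at hmem
        obtain ⟨f, hf⟩ := hmem
        exact ⟨f, fun _ => hf⟩
      · exact ⟨0, fun h => absurd h hl⟩
    choose f hf using hex
    let c : WittVector p (PowerSeries S) := WittVector.mk p f
    let b : WittVector p S := WittVector.map PowerSeries.constantCoeff c
    let b' : WittVector p (PowerSeries S) := WittVector.map (algebraMap S (PowerSeries S)) b
    have hb' : WittVector.map (algebraMap S K) b =
        WittVector.map (algebraMap (PowerSeries S) K) b' := by
      ext l
      simp only [b', WittVector.map_coeff, ← IsScalarTower.algebraMap_apply]
    have hdiff : ∀ l, ∃ g : PowerSeries S, (c - b').coeff l = PowerSeries.X * g := by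
      have hzero : WittVector.map PowerSeries.constantCoeff (c - b') = 0 := by
        rw [map_sub, sub_eq_zero]
        ext l
        simp [b', b, WittVector.map_coeff]
      intro l
      have := congrArg (fun w => w.coeff l) hzero
      simp only [WittVector.map_coeff, WittVector.zero_coeff] at this
      exact PowerSeries.X_dvd_iff.mpr this
    let low : WittVector p K := WittVector.select (· < s) a
    let shift : WittVector p K → WittVector p K :=
      (fun c : WittVector p K => WittVector.verschiebung c)^[s]
    let T : WittVector p K := WittVector.teichmuller p ((u ^ i : Kˣ) : K)
    have hshift_sub : ∀ x y, shift (x - y) = shift x - shift y :=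
      WittVector.iterate_verschiebung_sub s
    have hlow : ∀ j, low.coeff j = if j < s then a.coeff j else 0 := fun j => by
      by_cases hj : j < s <;> simp [low, WittVector.select, hj]
    have hadd : ∀ (x : WittVector p K) (j : ℕ),
        (low + shift x).coeff j = low.coeff j + (shift x).coeff j := by
      refine fun x j => WittVector.coeff_add_of_disjoint j _ _ fun k => ?_
      by_cases hk : k < s
      · exact Or.inr (hshift_zero x k hk)
      · exact Or.inl (by rw [hlow, if_neg hk])
    have hagree : ∀ j < m, a.coeff j =
        (low + shift (T * WittVector.map (algebraMap (PowerSeries S) K) c)).coeff j := by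
      intro j hj
      rw [hadd, hlow]
      by_cases hjs : j < s
      · rw [if_pos hjs, hshift_zero _ j hjs, add_zero]
      · obtain ⟨l, rfl⟩ : ∃ l, j = l + s := ⟨j - s, by omega⟩
        have hl : l < m - s := by omega
        rw [if_neg hjs, hshift, WittVector.coeff_teichmuller_mul, WittVector.map_coeff,
          WittVector.coeff_mk, hf l hl, hzpow, ← mul_assoc, ← Units.val_mul, ← zpow_add]
        simp
    have hrest : low + shift (T * WittVector.map (algebraMap (PowerSeries S) K) c) -
          shift (T * WittVector.map (algebraMap S K) b) =
        low + shift (T * WittVector.map (algebraMap (PowerSeries S) K) (c - b')) := by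
      rw [hb', map_sub, mul_sub, hshift_sub, add_sub_assoc]
    refine ⟨b, fun j hj => ?_⟩
    rw [WittVector.coeff_sub_congr hagree _ hj, hrest, hadd, hlow]
    by_cases hjs : j < s
    · rw [if_pos hjs, hshift_zero _ j hjs, add_zero]
      refine PowerSeries.zpow_mul_pow_mem_range_of_imp hu (pow_ne_zero _ hp.ne_zero)
        (fun r hr => ?_) (ha j hj)
      have hne : -n + r * (p ^ (m - 1 - j) : ℕ) ≠ 0 := by
        intro h
        refine hsmin j hjs ⟨r, ?_⟩
        push_cast at h
        linear_combination -h
      omega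
    · obtain ⟨l, rfl⟩ : ∃ l, j = l + s := ⟨j - s, by omega⟩
      have hl : l < m - s := by omega
      obtain ⟨g, hg⟩ := hdiff l
      rw [if_neg hjs, zero_add, hshift, WittVector.coeff_teichmuller_mul, hscale l hl,
        WittVector.map_coeff, hg]
      obtain ⟨q, hq⟩ := Nat.exists_eq_succ_of_ne_zero
        (pow_ne_zero (m - 1 - (l + s)) hp.ne_zero)
      refine ⟨g * (PowerSeries.X * g) ^ q, ?_⟩
      rw [hq, pow_succ']
      simp only [map_mul, map_pow, ← hu, zpow_neg_one, ← mul_assoc, Units.inv_mul, one_mul]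
  · obtain ⟨g, hg⟩ := hb (j + s) (by omega)
    rw [hshift, WittVector.coeff_teichmuller_mul, hscale j hj, WittVector.map_coeff,
      IsScalarTower.algebraMap_apply S (PowerSeries S) K, ← map_pow, ← map_pow] at hg
    by_contra hne
    have hmem := (PowerSeries.zpow_mul_mem_range_iff hu (-1)
      (f := algebraMap S (PowerSeries S) (b.coeff j ^ p ^ (m - 1 - (j + s))))
      (by
        rw [PowerSeries.algebraMap_apply, Algebra.algebraMap_self_apply,
          PowerSeries.constantCoeff_C]
        exact pow_ne_zero _ hne)).mp ⟨g, hg⟩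
    norm_num at hmem
end

section
/- Let S be a Noetherian regular local ring of characteristic p which is F-finite, A = S⟦π⟧, and K = A_π the localization of A away from π. Let m ≥ 1 and n ≥ 0. Let φ : 𝕎 K → 𝕎 K be the map induced by the Frobenius y ↦ y^p of K (so that, after truncation, φ(b) represents the Witt vector Frobenius F(b) and b represents R(b)). Then for every b ∈ 𝕎 K: φ(b) − b satisfies fil(π^n, m) if and only if φ(b) satisfies fil(π^n, m). (This is the q = 0 case of the statement that for ω ∈ Z_1 W_m Ω^q_K, one has (1 − C)(ω) ∈ fil_n W_m Ω^q_K if and only if ω ∈ Z_1 fil_n W_m Ω^q_K, applied to ω = F(b), since (1 − C)(F(b)) = F(b) − R(b).) -/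
open IsLocalRing in
/-- A Noetherian local ring whose maximal ideal is generated by `dim R` elements is a domain. -/
theorem isDomain_of_maximalIdeal_eq_span_range {d : ℕ} :
    ∀ {R : Type*} [CommRing R] [IsNoetherianRing R] [IsLocalRing R] (v : Fin d → R),
      Ideal.span (Set.range v) = maximalIdeal R → ringKrullDim R = d → IsDomain R := by
  induction d with
  | zero =>
    intro R _ _ _ v hv _
    have hbot : maximalIdeal R = ⊥ := by rw [← hv]; simp
    exact (isField_iff_maximalIdeal_eq.mpr hbot).isDomain
  | succ d ih =>
    intro R _ _ _ v hv hdim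
    have hheight : (maximalIdeal R).height ≠ 0 := by
      intro h
      have := maximalIdeal_height_eq_ringKrullDim (R := R)
      rw [h, hdim] at this
      norm_cast at this
    have hfin := minimalPrimes.finite_of_isNoetherianRing R
    obtain ⟨x, hxm, hx2, hxP⟩ : ∃ x ∈ maximalIdeal R, x ∉ maximalIdeal R ^ 2 ∧
        ∀ P ∈ minimalPrimes R, x ∉ P := by
      by_contra! hcon
      have hsub : (maximalIdeal R : Set R) ⊆
          ⋃ I ∈ (↑(insert (maximalIdeal R ^ 2) hfin.toFinset) : Set (Ideal R)), (I : Set R) := by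
        intro x hx
        by_cases h2 : x ∈ maximalIdeal R ^ 2
        · exact Set.mem_biUnion (by simp) h2
        · obtain ⟨P, hP, hxP⟩ := hcon x hx h2
          exact Set.mem_biUnion (by simp [hP]) hxP
      obtain ⟨I, hI, hle⟩ := (Ideal.subset_union_prime (f := fun I : Ideal R ↦ I)
        (maximalIdeal R ^ 2) (maximalIdeal R ^ 2) (by
          intro I hI hne _
          have : I ∈ minimalPrimes R := by simpa [hne] using hI
          exact this.1.1)).mp hsub
      rcases Finset.mem_insert.mp hI with rfl | hI
      · have : maximalIdeal R = ⊥ :=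
          Submodule.eq_bot_of_le_smul_of_le_jacobson_bot (maximalIdeal R) _
            (IsNoetherian.noetherian _) (by simpa [pow_two] using hle)
            (jacobson_eq_maximalIdeal ⊥ bot_ne_top).ge
        have := isField_iff_maximalIdeal_eq.mpr this
        have := ringKrullDim_eq_zero_of_isField this
        rw [hdim] at this
        norm_cast at this
      · have hI : I ∈ minimalPrimes R := by simpa using hI
        have := hI.1.1
        have hEq : I = maximalIdeal R := le_antisymm (le_maximalIdeal this.ne_top) hle
        exact hheight (hEq ▸ Ideal.height_eq_zero_iff.mpr hI)
    obtain ⟨a, ha⟩ : ∃ a : Fin (d + 1) → R, ∑ i, a i * v i = x := by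
      rw [← hv] at hxm
      simpa using Ideal.mem_span_range_iff_exists_fun.mp hxm
    obtain ⟨i, hi⟩ : ∃ i, IsUnit (a i) := by
      by_contra! hcon
      refine hx2 (ha ▸ Ideal.sum_mem _ fun i _ ↦ ?_)
      rw [pow_two]
      exact Ideal.mul_mem_mul (hcon i) (hv ▸ Ideal.subset_span ⟨i, rfl⟩)
    have hne : Ideal.span {x} ≠ ⊤ := by
      rwa [Ne, Ideal.span_singleton_eq_top, ← mem_nonunits_iff, ← mem_maximalIdeal]
    have : Nontrivial (R ⧸ Ideal.span {x}) := Ideal.Quotient.nontrivial_iff.mpr hne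
    let f := Ideal.Quotient.mk (Ideal.span {x})
    have hf : Function.Surjective f := Ideal.Quotient.mk_surjective
    have : IsLocalRing (R ⧸ Ideal.span {x}) := .of_surjective' f hf
    let w : Fin d → R ⧸ Ideal.span {x} := fun j ↦ f (v (i.succAbove j))
    have hw : Ideal.span (Set.range w) = maximalIdeal (R ⧸ Ideal.span {x}) := by
      apply le_antisymm
      · rw [Ideal.span_le]
        rintro _ ⟨j, rfl⟩
        have : IsLocalHom f := hf.isLocalHom
        exact map_nonunit f _ (hv ▸ Ideal.subset_span ⟨_, rfl⟩)
      · rw [← map_maximalIdeal_of_surjective f hf, ← hv, Ideal.map_span, Ideal.span_le]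
        rintro _ ⟨_, ⟨k, rfl⟩, rfl⟩
        have hs (j) : f (v (i.succAbove j)) ∈ Ideal.span (Set.range w) :=
          Ideal.subset_span ⟨j, rfl⟩
        rcases eq_or_ne k i with rfl | hk
        · have h0 : f x = 0 := Ideal.Quotient.eq_zero_iff_mem.mpr (Ideal.mem_span_singleton_self x)
          have h1 := congrArg f ha
          rw [h0, Fin.sum_univ_succAbove _ k, map_add, map_mul, map_sum] at h1
          have : f (a k) * f (v k) ∈ Ideal.span (Set.range w) := by
            rw [eq_neg_of_add_eq_zero_left h1]
            refine neg_mem (Ideal.sum_mem _ fun j _ ↦ ?_)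
            rw [map_mul]
            exact Ideal.mul_mem_left _ _ (hs j)
          exact (Ideal.unit_mul_mem_iff_mem _ (hi.map f)).mp this
        · obtain ⟨j, rfl⟩ := Fin.exists_succAbove_eq hk
          exact hs j
    have hdim' : ringKrullDim (R ⧸ Ideal.span {x}) = d := by
      apply le_antisymm
      · refine (ringKrullDim_le_spanFinrank_maximalIdeal _).trans ?_
        rw [← hw]
        have h1 := Submodule.spanFinrank_span_le_ncard_of_finite
          (R := R ⧸ Ideal.span {x}) (Set.finite_range w)
        have h2 : (Set.range w).ncard ≤ d := by
          simpa [← Set.image_univ, Set.ncard_univ] using Set.ncard_image_le (f := w) Set.finite_univ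
        exact_mod_cast h1.trans h2
      · have h := Ideal.height_le_ringKrullDim_quotient_add_one hxm
        rw [maximalIdeal_height_eq_ringKrullDim, hdim] at h
        push_cast at h
        exact ENat.WithBot.add_le_add_one_right_iff.mp h
    have hdom := ih w hw hdim'
    have hprime : (Ideal.span {x}).IsPrime := (Ideal.Quotient.isDomain_iff_prime _).mp hdom
    obtain ⟨P, hP, hPx⟩ := Ideal.exists_minimalPrimes_le (bot_le : ⊥ ≤ Ideal.span {x})
    have hPp : P.IsPrime := hP.1.1
    have hPbot : P = ⊥ := by
      refine Submodule.eq_bot_of_le_smul_of_le_jacobson_bot (maximalIdeal R) _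
        (IsNoetherian.noetherian _) (fun y hy ↦ ?_) (jacobson_eq_maximalIdeal ⊥ bot_ne_top).ge
      obtain ⟨z, rfl⟩ := Ideal.mem_span_singleton.mp (hPx hy)
      exact Ideal.mul_mem_mul hxm ((hPp.mem_or_mem hy).resolve_left (hxP P hP))
    rw [hPbot] at hPp
    exact .of_bot_isPrime R

namespace WittVector

variable {p : ℕ} [Fact p.Prime]

theorem eq_teichmuller_add_verschiebung_shift {R : Type*} [CommRing R] (a : WittVector p R) :
    a = teichmuller p (a.coeff 0) + verschiebung (a.shift 1) := by
  ext n
  rw [coeff_add_of_disjoint]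
  · cases n with
    | zero => simp
    | succ n => simp [teichmuller_coeff_pos, shift_coeff, verschiebung_coeff_succ, add_comm]
  · rintro (_ | n)
    · simp
    · simp [teichmuller_coeff_pos]

theorem teichmuller_mul_coeff {R : Type*} [CommRing R] [CharP R p] (x : R) (a : WittVector p R)
    (n : ℕ) : (teichmuller p x * a).coeff n = x ^ p ^ n * a.coeff n := by
  induction n generalizing x a with
  | zero => simp [mul_coeff_zero]
  | succ n ih =>
    have key : teichmuller p x * a = teichmuller p (x * a.coeff 0) +
        verschiebung (teichmuller p (x ^ p) * a.shift 1) := by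
      conv_lhs => rw [eq_teichmuller_add_verschiebung_shift a]
      have hF : frobenius (teichmuller p x) = teichmuller p (x ^ p) := by
        rw [frobenius_eq_map_frobenius, map_teichmuller, frobenius_def]
      rw [mul_add, map_mul, ← hF, mul_comm (frobenius _), verschiebung_mul_frobenius, mul_comm]
      ring
    rw [key, coeff_add_of_disjoint]
    · rw [teichmuller_coeff_pos p _ _ n.succ_pos, zero_add, verschiebung_coeff_succ, ih,
        shift_coeff, ← pow_mul, ← pow_succ', add_comm 1 n]
    · rintro (_ | n)
      · exact .inr (verschiebung_coeff_zero _)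
      · exact .inl (teichmuller_coeff_pos p _ _ n.succ_pos)

theorem truncate_eq_truncate_iff {R : Type*} [CommRing R] {m : ℕ} {a b : WittVector p R} :
    truncate m a = truncate m b ↔ ∀ j < m, a.coeff j = b.coeff j := by
  rw [TruncatedWittVector.ext_iff]
  simp only [coeff_truncate]
  exact ⟨fun h j hj ↦ h ⟨j, hj⟩, fun h i ↦ h i i.2⟩

theorem forall_coeff_mem_range_iff {A K : Type*} [CommRing A] [CommRing K] (f : A →+* K) {m : ℕ}
    {a : WittVector p K} :
    (∀ j < m, a.coeff j ∈ Set.range f) ↔ truncate m a ∈ ((truncate m).comp (map f)).range := by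
  simp only [RingHom.mem_range, RingHom.comp_apply, truncate_eq_truncate_iff, map_coeff]
  constructor
  · intro h
    choose! g hg using h
    exact ⟨mk p g, fun j hj ↦ by simpa using hg j hj⟩
  · rintro ⟨b, hb⟩ j hj
    exact ⟨_, hb j hj⟩

end WittVector

theorem algebraMap_pow_mem_range_iff {p : ℕ} {A K : Type*} [CommRing A] [CommRing K]
    [Algebra A K] (h : ∀ y : K, y ^ p ∈ Set.range (algebraMap A K) →
      y ∈ Set.range (algebraMap A K)) (y : K) (k : ℕ) :
    y ^ p ^ k ∈ Set.range (algebraMap A K) ↔ y ∈ Set.range (algebraMap A K) := by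
  refine ⟨fun hy ↦ ?_, fun hy ↦ pow_mem (S := (algebraMap A K).range) hy _⟩
  induction k with
  | zero => simpa using hy
  | succ k ih => exact ih (h _ (by rwa [← pow_mul, ← pow_succ]))

namespace WittFil

variable {p : ℕ} [Fact p.Prime] {A K : Type*} [CommRing A] [CommRing K] [Algebra A K]

theorem mono {x c : K} (hc : c ∈ Set.range (algebraMap A K)) {m : ℕ} {a : WittVector p K}
    (ha : WittFil p A x m a) : WittFil p A (c * x) m a := fun j hj ↦ by
  rw [mul_assoc]
  exact mul_mem (s := (algebraMap A K).range) hc (ha j hj)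

variable [CharP K p]

theorem iff_truncate_mem_range (h : ∀ y : K, y ^ p ∈ Set.range (algebraMap A K) →
      y ∈ Set.range (algebraMap A K)) {x : K} {m : ℕ} {a : WittVector p K} :
    WittFil p A x m a ↔ WittVector.truncate m
        (WittVector.teichmuller p x * (WittVector.frobenius^[m - 1]) a) ∈
      ((WittVector.truncate m).comp (WittVector.map (algebraMap A K))).range := by
  rw [← WittVector.forall_coeff_mem_range_iff]
  refine forall₂_congr fun j hj ↦ ?_
  rw [WittVector.teichmuller_mul_coeff, WittVector.iterate_frobenius_coeff,
    ← algebraMap_pow_mem_range_iff h _ j, mul_pow, ← pow_mul, ← pow_add, Nat.sub_add_cancel (by lia)]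

theorem add (h : ∀ y : K, y ^ p ∈ Set.range (algebraMap A K) → y ∈ Set.range (algebraMap A K))
    {x : K} {m : ℕ} {a b : WittVector p K} (ha : WittFil p A x m a) (hb : WittFil p A x m b) :
    WittFil p A x m (a + b) := by
  rw [iff_truncate_mem_range h] at *
  rw [iterate_map_add, mul_add, map_add]
  exact add_mem ha hb

theorem sub (h : ∀ y : K, y ^ p ∈ Set.range (algebraMap A K) → y ∈ Set.range (algebraMap A K))
    {x : K} {m : ℕ} {a b : WittVector p K} (ha : WittFil p A x m a) (hb : WittFil p A x m b) :
    WittFil p A x m (a - b) := by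
  rw [iff_truncate_mem_range h] at *
  rw [iterate_map_sub, mul_sub, map_sub]
  exact sub_mem ha hb

end WittFil

theorem PowerSeries.algebraMap_injective_of_isLocalization_away_X {S : Type*} [CommRing S]
    {K : Type*} [CommRing K] [Algebra (PowerSeries S) K]
    [IsLocalization.Away (PowerSeries.X : PowerSeries S) K] :
    Function.Injective (algebraMap (PowerSeries S) K) :=
  IsLocalization.injective K (M := Submonoid.powers (X : PowerSeries S)) <|
    Submonoid.powers_le.mpr <| mem_nonZeroDivisors_iff_right.mpr fun f hf ↦
      X_mul_cancel (by rw [mul_comm, hf, mul_zero])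

theorem PowerSeries.mem_range_algebraMap_of_pow_mem {p : ℕ} [Fact p.Prime] {S : Type*} [CommRing S]
    [IsReduced S] {K : Type*} [CommRing K] [Algebra (PowerSeries S) K]
    [IsLocalization.Away (PowerSeries.X : PowerSeries S) K] {r : ℕ} (hr : r < p) {y : K}
    (hy : algebraMap (PowerSeries S) K X ^ r * y ^ p ∈ Set.range (algebraMap (PowerSeries S) K)) :
    y ∈ Set.range (algebraMap (PowerSeries S) K) := by
  have hinj := algebraMap_injective_of_isLocalization_away_X (S := S) (K := K)
  obtain ⟨g, hg⟩ := hy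
  have hex : ∃ k, ∃ f, algebraMap (PowerSeries S) K X ^ k * y = algebraMap (PowerSeries S) K f := by
    obtain ⟨k, f, hf⟩ := IsLocalization.Away.surj (X : PowerSeries S) y
    exact ⟨k, f, by rw [mul_comm, hf]⟩
  classical
  obtain ⟨f, hf⟩ := Nat.find_spec hex
  have hmin := fun k ↦ Nat.find_min hex (m := k)
  generalize Nat.find hex = k at hf hmin
  rcases k with _ | k
  · exact ⟨f, by simpa using hf.symm⟩
  have h1 : X ^ ((k + 1) * p) * g = X ^ r * f ^ p := by
    apply hinj
    rw [map_mul, map_mul, map_pow, map_pow, map_pow, ← hf, hg]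
    ring
  obtain ⟨s, hs⟩ : ∃ s, (k + 1) * p = r + (s + 1) := ⟨(k + 1) * p - r - 1, by
    have : p ≤ (k + 1) * p := Nat.le_mul_of_pos_left _ k.succ_pos
    lia⟩
  have h2 : X ^ (s + 1) * g = f ^ p := by
    rw [hs, pow_add, mul_assoc] at h1
    exact X_pow_mul_cancel h1
  have h3 : constantCoeff f = 0 := by
    have := congrArg constantCoeff h2
    simp only [map_mul, map_pow, constantCoeff_X, pow_succ, mul_zero, zero_mul] at this
    exact eq_zero_of_pow_eq_zero this.symm
  obtain ⟨f', rfl⟩ := X_dvd_iff.mpr h3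
  refine absurd ⟨f', ?_⟩ (hmin k k.lt_succ_self)
  apply (IsLocalization.Away.algebraMap_isUnit (S := K) (X : PowerSeries S)).mul_left_cancel
  rw [← mul_assoc, ← pow_succ', hf, map_mul]

/-- Let `S` be an `F`-finite Noetherian regular local ring of
characteristic `p`, `A = S⟦π⟧`, `K = A_π`, `m ≥ 1` and `n ≥ 0`.  Let
`φ : 𝕎 K → 𝕎 K` be induced by the Frobenius `y ↦ y^p` of `K`.  Then for every
`b ∈ 𝕎 K`: `φ(b) - b` satisfies `fil(π^n, m)` iff `φ(b)` satisfies `fil(π^n, m)`.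
(The `q = 0` case of: `(1-C)(ω) ∈ fil_n W_m Ω^q_K ↔ ω ∈ Z₁ fil_n W_m Ω^q_K` for
`ω = F(b)`, since `(1-C)(F(b)) = F(b) - R(b)`.) -/
theorem wittFil_one_sub_cartier_iff
    (p : ℕ) [Fact p.Prime]
    (S : Type*) [CommRing S] [IsNoetherianRing S] [IsLocalRing S] [CharP S p]
    (hreg : ∃ (d : ℕ) (v : Fin d → S),
      Ideal.span (Set.range v) = IsLocalRing.maximalIdeal S ∧ ringKrullDim S = d)
    (hF : (frobenius S p).Finite)
    (K : Type*) [CommRing K] [Algebra (PowerSeries S) K]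
    [IsLocalization.Away (PowerSeries.X : PowerSeries S) K]
    (m : ℕ) (hm : 1 ≤ m) (n : ℕ)
    (φ : K →+* K) (hφ : ∀ y : K, φ y = y ^ p) :
    ∀ b : WittVector p K,
      WittFil p (PowerSeries S) ((algebraMap (PowerSeries S) K PowerSeries.X) ^ n) m
        (WittVector.map φ b - b) ↔
      WittFil p (PowerSeries S) ((algebraMap (PowerSeries S) K PowerSeries.X) ^ n) m
        (WittVector.map φ b) := by
  obtain ⟨d, v, hv, hdim⟩ := hreg
  have := isDomain_of_maximalIdeal_eq_span_range v hv hdim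
  have hinj := PowerSeries.algebraMap_injective_of_isLocalization_away_X (S := S) (K := K)
  have : CharP (PowerSeries S) p :=
    charP_of_injective_ringHom (f := PowerSeries.C (R := S)) PowerSeries.C_injective p
  have : CharP K p := charP_of_injective_ringHom hinj p
  have hp := (Fact.out : p.Prime)
  have hroot (y : K) (hy : y ^ p ∈ Set.range (algebraMap (PowerSeries S) K)) :
      y ∈ Set.range (algebraMap (PowerSeries S) K) :=
    PowerSeries.mem_range_algebraMap_of_pow_mem hp.pos (by simpa using hy)
  intro b
  set x := algebraMap (PowerSeries S) K PowerSeries.X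
  have hx (k : ℕ) : x ^ k ∈ Set.range (algebraMap (PowerSeries S) K) := ⟨.X ^ k, map_pow _ _ _⟩
  have hmono {N M : ℕ} (h : N ≤ M) {a : WittVector p K}
      (ha : WittFil p (PowerSeries S) (x ^ N) m a) : WittFil p (PowerSeries S) (x ^ M) m a := by
    rw [← Nat.sub_add_cancel h, pow_add]
    exact ha.mono (hx _)
  have hdiv {N : ℕ} (h : WittFil p (PowerSeries S) (x ^ N) m (WittVector.map φ b)) :
      WittFil p (PowerSeries S) (x ^ (N / p)) m b := fun j hj ↦ by
    refine PowerSeries.mem_range_algebraMap_of_pow_mem (Nat.mod_lt N hp.pos) ?_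
    convert! h j hj using 1
    rw [WittVector.map_coeff, hφ, mul_pow, ← mul_assoc, ← pow_mul, ← pow_add, pow_right_comm,
      mul_comm (N / p), Nat.mod_add_div]
  constructor
  · intro h
    have key (N : ℕ) (hN : WittFil p (PowerSeries S) (x ^ N) m b) :
        WittFil p (PowerSeries S) (x ^ n) m b := by
      induction N using Nat.strong_induction_on with
      | _ N ih =>
        rcases le_or_gt N n with hle | hlt
        · exact hmono hle hN
        · refine ih (N / p) (Nat.div_lt_self (by lia) hp.one_lt) (hdiv ?_)
          simpa using (hmono hlt.le h).add hroot hN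
    obtain ⟨N, hN⟩ : ∃ N, WittFil p (PowerSeries S) (x ^ N) m b := by
      have hex (j : ℕ) : ∃ k, x ^ k * b.coeff j ^ p ^ (m - 1 - j) ∈
          Set.range (algebraMap (PowerSeries S) K) := by
        obtain ⟨k, f, hf⟩ := IsLocalization.Away.surj (PowerSeries.X : PowerSeries S)
          (b.coeff j ^ p ^ (m - 1 - j))
        exact ⟨k, f, by rw [mul_comm, hf]⟩
      choose k hk using hex
      refine ⟨∑ j ∈ Finset.range m, k j, fun j hj ↦ ?_⟩
      rw [← Finset.sum_erase_add _ _ (Finset.mem_range.mpr hj), pow_add, mul_assoc]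
      exact mul_mem (s := (algebraMap (PowerSeries S) K).range) (hx _) (hk j)
    simpa using h.add hroot (key N hN)
  · intro h
    exact h.sub hroot (hmono (Nat.div_le_self n p) (hdiv h))
end

section
/- Let R be a commutative Noetherian local ring with maximal ideal 𝔪, and let M be a finitely generated R-module. Let M^∧ = AdicCompletion 𝔪 M be the 𝔪-adic completion of M, regarded as a module over R^∧ = AdicCompletion 𝔪 R, with canonical map of : M → M^∧. Let N' be an R^∧-submodule of M^∧ and N an R-submodule of M such that of(y) ∈ N' for every y ∈ N, and such that N is 𝔪-adically dense in N': for every x ∈ N' and every k ∈ ℕ there exists y ∈ N with x − of(y) ∈ 𝔪^k · M^∧. Then: (a) N = {z ∈ M : of(z) ∈ N'}, i.e. for every z ∈ M with of(z) ∈ N' one has z ∈ N; and (b) N' is closed, i.e. N' = {x ∈ M^∧ : for every k ∈ ℕ there exists y ∈ N with x − of(y) ∈ 𝔪^k · M^∧}; in other words N' is the 𝔪-adic completion (closure) of N inside M^∧. -/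
namespace AdicCompletion

variable {R : Type*} [CommRing R] (I : Ideal R) {M : Type*} [AddCommGroup M] [Module R M]

/-- An element of the completion of `M` that is adherent to `N` maps to zero in the completion
of `M ⧸ N`. -/
theorem map_mkQ_eq_zero_of_adherent (N : Submodule R M) {x : AdicCompletion I M}
    (hx : ∀ k : ℕ, ∃ y ∈ N, x - of I M y ∈ I ^ k • (⊤ : Submodule R (AdicCompletion I M))) :
    map I N.mkQ x = 0 := by
  refine IsHausdorff.haus inferInstance (I := I) _ fun k ↦ ?_
  obtain ⟨y, hy, hxy⟩ := hx k
  have hmap := Submodule.mem_map_of_mem (f := (map I N.mkQ).restrictScalars R) hxy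
  rw [Submodule.map_smul''] at hmap
  have hy0 : map I N.mkQ (of I M y) = 0 := by
    rw [map_of, Submodule.mkQ_apply, (Submodule.Quotient.mk_eq_zero N).2 hy, _root_.map_zero]
  rw [LinearMap.restrictScalars_apply, map_sub, hy0, sub_zero] at hmap
  exact SModEq.zero.2 (Submodule.smul_mono le_rfl le_top hmap)

/-- For a finite module `N`, the image of the completion of `N` under a completed map is contained
in every submodule over the completed ring that contains the image of `N`. -/
theorem range_map_le {N : Type*} [AddCommGroup N] [Module R N] [Module.Finite R N] (f : N →ₗ[R] M)
    (N' : Submodule (AdicCompletion I R) (AdicCompletion I M))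
    (h : ∀ y, of I M (f y) ∈ N') : LinearMap.range (map I f) ≤ N' := by
  rintro _ ⟨n, rfl⟩
  obtain ⟨t, rfl⟩ := ofTensorProduct_surjective_of_finite I N n
  induction t with
  | zero => simp
  | tmul r y => simpa only [ofTensorProduct_tmul, map_smul, map_of] using N'.smul_mem r (h y)
  | add s t hs ht => simpa using N'.add_mem hs ht

/-- Over a Noetherian ring, an element of the completion of a finite module `M` that is adherent
to `N` comes from the completion of `N`. -/
theorem mem_range_map_subtype_of_adherent [IsNoetherianRing R] [Module.Finite R M]
    (N : Submodule R M) {x : AdicCompletion I M}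
    (hx : ∀ k : ℕ, ∃ y ∈ N, x - of I M y ∈ I ^ k • (⊤ : Submodule R (AdicCompletion I M))) :
    x ∈ LinearMap.range (map I N.subtype) := by
  choose y hyN hy using hx
  have hval (k : ℕ) : x.val k = Submodule.Quotient.mk (y k) := by
    have h := pow_smul_top_le_ker_eval I k (hy k)
    rwa [LinearMap.mem_ker, map_sub, eval_of, sub_eq_zero] at h
  have hval_le {m k : ℕ} (hmk : m ≤ k) : x.val m = Submodule.Quotient.mk (y k) := by
    rw [← x.prop hmk, hval k]
    rfl
  obtain ⟨c, hc⟩ := Ideal.exists_pow_inf_eq_pow_smul I N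
  let b : ℕ → N := fun n ↦ ⟨y (n + c), hyN _⟩
  have hb (n : ℕ) : b n ≡ b (n + 1) [SMOD (I ^ n • ⊤ : Submodule R N)] := by
    have hmem : y (n + c) - y (n + 1 + c) ∈ I ^ (n + c) • (⊤ : Submodule R M) ⊓ N :=
      ⟨(Submodule.Quotient.eq _).1 ((hval_le le_rfl).symm.trans (hval_le (by lia))),
        N.sub_mem (hyN _) (hyN _)⟩
    rw [hc _ (by lia), Nat.add_sub_cancel] at hmem
    have hmap : y (n + c) - y (n + 1 + c) ∈ (I ^ n • ⊤ : Submodule R N).map N.subtype := by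
      rw [Submodule.map_smul'', Submodule.map_top, Submodule.range_subtype]
      exact Submodule.smul_mono le_rfl inf_le_right hmem
    obtain ⟨d, hd, hdy⟩ := hmap
    rwa [SModEq.sub_mem, show b n - b (n + 1) = d from Subtype.ext hdy.symm]
  refine ⟨mk I N (AdicCauchySequence.mk I N b hb), ?_⟩
  ext n
  exact (hval_le (Nat.le_add_right n c)).symm

end AdicCompletion

/-- Let `R` be a commutative Noetherian local ring with maximal ideal
`𝔪` and `M` a finitely generated `R`-module, with `𝔪`-adic completion `M^∧` regarded as
a module over `R^∧`.  Let `N'` be an `R^∧`-submodule of `M^∧` and `N ⊆ M ∩ N'` an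
`R`-submodule which is `𝔪`-adically dense in `N'`.  Then `N = M ∩ N'` and `N'` is the
closure (`𝔪`-adic completion) of `N` in `M^∧`. -/
theorem dense_submodule_of_completion_closure
    (R : Type*) [CommRing R] [IsNoetherianRing R] [IsLocalRing R]
    (M : Type*) [AddCommGroup M] [Module R M] [Module.Finite R M]
    (N' : Submodule (AdicCompletion (IsLocalRing.maximalIdeal R) R)
      (AdicCompletion (IsLocalRing.maximalIdeal R) M))
    (N : Submodule R M)
    (hNN' : ∀ y ∈ N, AdicCompletion.of (IsLocalRing.maximalIdeal R) M y ∈ N')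
    (hdense : ∀ x ∈ N', ∀ k : ℕ, ∃ y ∈ N,
      x - AdicCompletion.of (IsLocalRing.maximalIdeal R) M y ∈
        (IsLocalRing.maximalIdeal R) ^ k •
          (⊤ : Submodule R (AdicCompletion (IsLocalRing.maximalIdeal R) M))) :
    (∀ z : M, AdicCompletion.of (IsLocalRing.maximalIdeal R) M z ∈ N' → z ∈ N) ∧
    ((N' : Set (AdicCompletion (IsLocalRing.maximalIdeal R) M)) =
      {x | ∀ k : ℕ, ∃ y ∈ N,
        x - AdicCompletion.of (IsLocalRing.maximalIdeal R) M y ∈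
          (IsLocalRing.maximalIdeal R) ^ k •
            (⊤ : Submodule R (AdicCompletion (IsLocalRing.maximalIdeal R) M))}) := by
  refine ⟨fun z hz ↦ ?_, Set.Subset.antisymm hdense fun x hx ↦ ?_⟩
  · have h := AdicCompletion.map_mkQ_eq_zero_of_adherent _ N (hdense _ hz)
    rw [AdicCompletion.map_of] at h
    rw [← N.ker_mkQ, LinearMap.mem_ker]
    exact AdicCompletion.of_injective (IsLocalRing.maximalIdeal R) (M ⧸ N)
      (h.trans (map_zero _).symm)
  · exact AdicCompletion.range_map_le _ N.subtype N' (fun y ↦ hNN' y y.2)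
      (AdicCompletion.mem_range_map_subtype_of_adherent _ N hx)
end
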